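/- If G is a connected graph of order n, then the average size of a nonempty connected vertex set satisfies A(G) ≥ (n+2)/3, with equality if and only if G is a path. -/

import Mathlib

open Finset Filter

attribute [local instance] Classical.propDecidable

noncomputable def connSets {V : Type*} [Fintype V] (G : SimpleGraph V) : Finset (Finset V) :=
  Finset.univ.filter fun U => U.Nonempty ∧ (G.induce (U : Set V)).Connected

def KConnected {V : Type*} [Fintype V] (k : ℕ) (G : SimpleGraph V) : Prop :=
  k < Fintype.card V ∧
    ∀ S : Finset V, S.card < k → (G.induce ((Sᶜ : Finset V) : Set V)).Connected

/-!
Say that the *excess* of a connected set `W` is three times the sum, over all connected `U ⊆ W`, of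
`|U| - (|W| + 2) / 3`. Fix `v ∈ W` and split the connected subsets of `W` into those through `v` and
those inside a component `C` of `G[W] - v`. The sets through `v` have average size at least
`(|W| + 1) / 2`, and up to this the excess of `W` is the sum of the excesses of the components plus
terms `(|C| N(v) - 2 |W \ C| N(C)) / 2`, where `N(v)` counts the sets through `v` and `N(C)` those
inside `C`. Hence the excess is nonnegative by induction, provided some `v` makes all these terms
nonnegative.

If there were no such `v`, every vertex would have a bad branch `D v`. Choose vertices `K` such that
the bad branch at each contains all the others and no vertex of `W` lies in all these branches.
Then `W \ D w ⊆ D x` for distinct `w, x ∈ K`, so each connected subset of `D x` can be charged to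
some `w ∈ K` other than `x`; summing these estimates with suitable weights shows that a branch at
some `x ∈ K` is not bad after all.

In the case of equality every component `C` has excess zero, so it is a path by induction and
`N(C) = |C| (|C| + 1) / 2`. Equality in the comparison for `C` then leaves only `|W \ C|` connected
sets through `v` in `W \ C` and `|C| + 1` in `C ∪ {v}`, which forces both to be paths ending at `v`.
-/

section ConnectedSets

variable {V : Type*} {G : SimpleGraph V} {U W : Finset V} {a b x : V}

/-- `U` is a connected vertex set of `G`: it induces a connected subgraph, and so is nonempty. -/
def IsConnSet (G : SimpleGraph V) (U : Finset V) : Prop :=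
  (G.induce (U : Set V)).Connected

theorem IsConnSet.nonempty (hU : IsConnSet G U) : U.Nonempty := by
  obtain ⟨v, hv⟩ := SimpleGraph.Connected.nonempty hU
  exact ⟨v, hv⟩

theorem isConnSet_singleton (v : V) : IsConnSet G {v} := by
  rw [IsConnSet, coe_singleton, SimpleGraph.induce_singleton_eq_top]
  exact SimpleGraph.connected_top

theorem IsConnSet.union (hU : IsConnSet G U) (hW : IsConnSet G W) (h : (U ∩ W).Nonempty) :
    IsConnSet G (U ∪ W) := by
  rw [IsConnSet, coe_union]
  exact SimpleGraph.induce_union_connected hU.preconnected hW.preconnected (by exact_mod_cast h)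

theorem isConnSet_pair (hab : G.Adj a b) : IsConnSet G {a, b} := by
  rw [IsConnSet, coe_pair]
  exact SimpleGraph.induce_pair_connected_of_adj hab

theorem IsConnSet.insert_of_adj (hU : IsConnSet G U) (ha : a ∈ U) (hab : G.Adj a b) :
    IsConnSet G (insert b U) := by
  convert hU.union (isConnSet_pair hab) ⟨a, by simp [ha]⟩ using 1
  grind

theorem IsConnSet.exists_adj (hU : IsConnSet G U) {T : Finset V} (hT : (U ∩ T).Nonempty)
    (hUT : ¬U ⊆ T) : ∃ a ∈ U, a ∈ T ∧ ∃ b ∈ U, b ∉ T ∧ G.Adj a b := by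
  obtain ⟨t, ht⟩ := hT
  obtain ⟨htU, htT⟩ := mem_inter.1 ht
  obtain ⟨u, huU, huT⟩ := not_subset.1 hUT
  obtain ⟨p⟩ := hU.preconnected ⟨t, htU⟩ ⟨u, huU⟩
  obtain ⟨d, -, hfst, hsnd⟩ := p.exists_boundary_dart {y | (y : V) ∈ T} htT huT
  exact ⟨d.fst, d.fst.2, hfst, d.snd, d.snd.2, hsnd, d.adj⟩

theorem IsConnSet.exists_adj_of_ssubset (hW : IsConnSet G W) (hU : U.Nonempty) (hUW : U ⊂ W) :
    ∃ a ∈ U, ∃ b ∈ W, b ∉ U ∧ G.Adj a b := by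
  obtain ⟨a, -, ha, b, hb⟩ :=
    hW.exists_adj (by rwa [inter_eq_right.2 hUW.subset]) hUW.not_subset
  exact ⟨a, ha, b, hb⟩

theorem isConnSet_of_patches (hx : x ∈ W)
    (hpatch : ∀ z ∈ W, ∃ U ⊆ W, IsConnSet G U ∧ x ∈ U ∧ z ∈ U) : IsConnSet G W := by
  refine G.induce_connected_of_patches x hx fun {z} hz ↦ ?_
  obtain ⟨U, hUW, hU, hxU, hzU⟩ := hpatch z hz
  exact ⟨U, coe_subset.2 hUW, hxU, hzU, hU.preconnected _ _⟩

@[elab_as_elim]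
theorem IsConnSet.induction_on {motive : Finset V → Prop} (hW : IsConnSet G W) (hx : x ∈ W)
    (singleton : motive {x})
    (insert : ∀ ⦃U⦄, IsConnSet G U → x ∈ U → ∀ a ∈ U, ∀ b ∉ U, G.Adj a b → motive U →
      motive (insert b U)) : motive W := by
  obtain ⟨U, -, hmax⟩ := exists_le_maximal
    {U ∈ W.powerset | IsConnSet G U ∧ x ∈ U ∧ motive U} (a := {x})
    (by simp [hx, isConnSet_singleton, singleton])
  obtain ⟨hUW, hU, hxU, hmotive⟩ :
      U ⊆ W ∧ IsConnSet G U ∧ x ∈ U ∧ motive U := by simpa using hmax.prop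
  obtain rfl | hssub := hUW.eq_or_ssubset
  · exact hmotive
  obtain ⟨a, ha, b, hb, hbU, hab⟩ := hW.exists_adj_of_ssubset hU.nonempty hssub
  have hbig := hmax.le_of_ge (y := Insert.insert b U) (by
    simp [insert_subset hb hUW, hU.insert_of_adj ha hab, hxU, insert hU hxU a ha b hbU hab hmotive])
    (subset_insert b U)
  exact absurd (hbig (mem_insert_self b U)) hbU

end ConnectedSets

section Components

variable {V : Type*} {G : SimpleGraph V} {C D U W X : Finset V} {a b v w x : V}

/-- `C` is (the vertex set of) a connected component of `G[X]`. Components of `G[W] - v` are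
obtained with `X = W.erase v`. -/
def IsComponent (G : SimpleGraph V) (X C : Finset V) : Prop :=
  Maximal (fun U ↦ U ⊆ X ∧ IsConnSet G U) C

namespace IsComponent

theorem subset (hC : IsComponent G X C) : C ⊆ X := hC.prop.1

theorem isConnSet (hC : IsComponent G X C) : IsConnSet G C := hC.prop.2

theorem subset_of_inter_nonempty (hC : IsComponent G X C) (hU : IsConnSet G U) (hUX : U ⊆ X)
    (h : (U ∩ C).Nonempty) : U ⊆ C :=
  subset_union_left.trans
    (hC.le_of_ge ⟨union_subset hUX hC.subset, hU.union hC.isConnSet h⟩ subset_union_right)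

theorem eq_of_inter_nonempty (hC : IsComponent G X C) (hD : IsComponent G X D)
    (h : (C ∩ D).Nonempty) : C = D :=
  (hD.subset_of_inter_nonempty hC.isConnSet hC.subset h).antisymm
    (hC.subset_of_inter_nonempty hD.isConnSet hD.subset (inter_comm C D ▸ h))

theorem subset_of_erase (hC : IsComponent G (W.erase v) C) : C ⊆ W :=
  hC.subset.trans (erase_subset v W)

theorem notMem (hC : IsComponent G (W.erase v) C) : v ∉ C :=
  fun hv ↦ notMem_erase v W (hC.subset hv)

theorem mem_of_crossing (hC : IsComponent G (W.erase v) C) (hU : IsConnSet G U) (hUW : U ⊆ W)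
    (hmeet : (U ∩ C).Nonempty) (hleave : ¬U ⊆ C) : v ∈ U := by
  by_contra hv
  exact hleave (hC.subset_of_inter_nonempty hU (subset_erase.2 ⟨hUW, hv⟩) hmeet)

theorem sdiff_union_insert (hC : IsComponent G (W.erase v) C) (hv : v ∈ W) :
    W \ C ∪ insert v C = W := by
  rw [union_insert, sdiff_union_of_subset hC.subset_of_erase, insert_eq_of_mem hv]

theorem eq_of_adj (hC : IsComponent G (W.erase v) C) (ha : a ∈ C) (hb : b ∈ W) (hbC : b ∉ C)
    (hab : G.Adj a b) : b = v := by
  by_contra hbv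
  have hsub : insert b C ⊆ W.erase v := insert_subset (mem_erase.2 ⟨hbv, hb⟩) hC.subset
  exact hbC (hC.subset_of_inter_nonempty (hC.isConnSet.insert_of_adj ha hab) hsub
    ⟨a, by simp [ha]⟩ (mem_insert_self b C))

theorem exists_adj (hC : IsComponent G (W.erase v) C) (hW : IsConnSet G W) (hv : v ∈ W) :
    ∃ a ∈ C, G.Adj a v := by
  have hssub : C ⊂ W := hC.subset_of_erase.ssubset_of_ne fun h ↦ hC.notMem (h ▸ hv)
  obtain ⟨a, ha, b, hb, hbC, hab⟩ := hW.exists_adj_of_ssubset hC.isConnSet.nonempty hssub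
  exact ⟨a, ha, hC.eq_of_adj ha hb hbC hab ▸ hab⟩

theorem isConnSet_insert (hC : IsComponent G (W.erase v) C) (hW : IsConnSet G W) (hv : v ∈ W) :
    IsConnSet G (insert v C) :=
  let ⟨_, ha, hav⟩ := hC.exists_adj hW hv
  hC.isConnSet.insert_of_adj ha hav

end IsComponent

theorem IsConnSet.exists_isComponent (hU : IsConnSet G U) (hUX : U ⊆ X) :
    ∃ C, IsComponent G X C ∧ U ⊆ C := by
  have hfin : {U | U ⊆ X ∧ IsConnSet G U}.Finite := X.powerset.finite_toSet.subset fun U hU ↦ by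
    simpa using hU.1
  obtain ⟨C, hUC, hC⟩ := hfin.exists_le_maximal (a := U) ⟨hUX, hU⟩
  exact ⟨C, hC, hUC⟩

theorem exists_isComponent_of_mem (G : SimpleGraph V) (hx : x ∈ X) :
    ∃ C, IsComponent G X C ∧ x ∈ C := by
  obtain ⟨C, hC, hxC⟩ :=
    (isConnSet_singleton (G := G) x).exists_isComponent (singleton_subset_iff.2 hx)
  exact ⟨C, hC, singleton_subset_iff.1 hxC⟩

theorem IsComponent.isConnSet_sdiff (hC : IsComponent G (W.erase v) C) (hW : IsConnSet G W)
    (hv : v ∈ W) : IsConnSet G (W \ C) := by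
  refine isConnSet_of_patches (mem_sdiff.2 ⟨hv, hC.notMem⟩) fun z hz ↦ ?_
  obtain ⟨hzW, hzC⟩ := mem_sdiff.1 hz
  obtain rfl | hzv := eq_or_ne z v
  · exact ⟨{z}, singleton_subset_iff.2 hz, isConnSet_singleton z, by simp, by simp⟩
  obtain ⟨D, hD, hzD⟩ := exists_isComponent_of_mem G (mem_erase.2 ⟨hzv, hzW⟩)
  refine ⟨insert v D, ?_, hD.isConnSet_insert hW hv, by simp, by simp [hzD]⟩
  have hdisj : ∀ y ∈ D, y ∉ C := fun y hyD hyC ↦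
    hzC (hC.eq_of_inter_nonempty hD ⟨y, by simp [hyC, hyD]⟩ ▸ hzD)
  exact insert_subset (mem_sdiff.2 ⟨hv, hC.notMem⟩) fun y hy ↦
    mem_sdiff.2 ⟨hD.subset_of_erase hy, hdisj y hy⟩

theorem IsConnSet.erase_of_forall_adj_eq (hW : IsConnSet G W) (hv : v ∈ W) (hw : w ∈ W.erase v)
    (huniq : ∀ z ∈ W, G.Adj v z → z = w) : IsConnSet G (W.erase v) := by
  obtain ⟨C, hC, hwC⟩ := exists_isComponent_of_mem G hw
  suffices h : W.erase v ⊆ C from h.antisymm hC.subset ▸ hC.isConnSet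
  intro z hz
  obtain ⟨D, hD, hzD⟩ := exists_isComponent_of_mem G hz
  obtain ⟨a, haD, hav⟩ := hD.exists_adj hW hv
  obtain rfl : a = w := huniq a (hD.subset_of_erase haD) hav.symm
  rwa [hC.eq_of_inter_nonempty hD ⟨a, by simp [haD, hwC]⟩]

/-- The set of connected components of `G[X]`. -/
noncomputable def components (G : SimpleGraph V) (X : Finset V) : Finset (Finset V) :=
  {C ∈ X.powerset | IsComponent G X C}

theorem mem_components : C ∈ components G X ↔ IsComponent G X C := by
  simpa [components] using IsComponent.subset

theorem sum_card_components (G : SimpleGraph V) (X : Finset V) :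
    ∑ C ∈ components G X, #C = #X := by
  have hdisj : (components G X : Set (Finset V)).PairwiseDisjoint id :=
    fun C hC D hD hne ↦ disjoint_iff_inter_eq_empty.2 <| not_nonempty_iff_eq_empty.1 fun h ↦
      hne ((mem_components.1 hC).eq_of_inter_nonempty (mem_components.1 hD) h)
  refine (card_biUnion hdisj).symm.trans ?_
  congr 1
  ext z
  simp only [mem_biUnion, mem_components, id]
  exact ⟨fun ⟨C, hC, hz⟩ ↦ hC.subset hz, fun hz ↦ exists_isComponent_of_mem G hz⟩

end Components

section Counting

variable {V : Type*} {G : SimpleGraph V} {A B C H U W X : Finset V} {v : V}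

/-- The connected sets `U` of `G` with `H ⊆ U ⊆ W`. All connected subsets of `W` are obtained with
`H = ∅`, and those through `v` with `H = {v}`. -/
noncomputable def connBetween (G : SimpleGraph V) (H W : Finset V) : Finset (Finset V) :=
  {U ∈ Icc H W | IsConnSet G U}

theorem mem_connBetween : U ∈ connBetween G H W ↔ H ⊆ U ∧ U ⊆ W ∧ IsConnSet G U := by
  simp [connBetween, and_assoc]

theorem connBetween_mono_right (hWX : W ⊆ X) : connBetween G H W ⊆ connBetween G H X := by
  intro U hU
  rw [mem_connBetween] at hU ⊢
  exact ⟨hU.1, hU.2.1.trans hWX, hU.2.2⟩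

theorem sum_connBetween_split {M : Type*} [AddCommMonoid M] (G : SimpleGraph V) (H W : Finset V)
    (v : V) (f : Finset V → M) :
    ∑ U ∈ connBetween G H W, f U =
      ∑ U ∈ connBetween G (insert v H) W, f U + ∑ U ∈ connBetween G H (W.erase v), f U := by
  rw [← sum_filter_add_sum_filter_not _ (v ∈ ·)]
  congr 2 <;> ext U <;> simp only [mem_filter, mem_connBetween, insert_subset_iff, subset_erase] <;>
    tauto

theorem card_connBetween_split (G : SimpleGraph V) (H W : Finset V) (v : V) :
    #(connBetween G H W) = #(connBetween G (insert v H) W) + #(connBetween G H (W.erase v)) := by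
  simpa only [card_eq_sum_ones] using sum_connBetween_split G H W v fun _ ↦ 1

theorem IsComponent.connBetween_eq (hC : IsComponent G X C) (hH : H.Nonempty) (hHC : H ⊆ C) :
    connBetween G H X = connBetween G H C := by
  refine Subset.antisymm (fun U hU ↦ ?_) (connBetween_mono_right hC.subset)
  rw [mem_connBetween] at hU ⊢
  obtain ⟨hHU, hUX, hU⟩ := hU
  exact ⟨hHU, hC.subset_of_inter_nonempty hU hUX (hH.mono (subset_inter hHU hHC)), hU⟩

theorem sum_connBetween_empty_eq_sum_components {M : Type*} [AddCommMonoid M] (G : SimpleGraph V)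
    (X : Finset V) (f : Finset V → M) :
    ∑ U ∈ connBetween G ∅ X, f U = ∑ C ∈ components G X, ∑ U ∈ connBetween G ∅ C, f U := by
  rw [← sum_biUnion]
  · congr 1
    ext U
    simp only [mem_biUnion, mem_components, mem_connBetween, empty_subset, true_and]
    refine ⟨fun ⟨hUX, hU⟩ ↦ ?_, fun ⟨C, hC, hUC, hU⟩ ↦ ⟨hUC.trans hC.subset, hU⟩⟩
    obtain ⟨C, hC, hUC⟩ := hU.exists_isComponent hUX
    exact ⟨C, hC, hUC, hU⟩
  · intro C hC D hD hne
    refine disjoint_left.2 fun U hUC hUD ↦ hne ?_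
    obtain ⟨-, hUC, hU⟩ := mem_connBetween.1 hUC
    obtain ⟨-, hUD, -⟩ := mem_connBetween.1 hUD
    exact (mem_components.1 hC).eq_of_inter_nonempty (mem_components.1 hD)
      (hU.nonempty.mono (subset_inter hUC hUD))

theorem card_sdiff_lt_card_connBetween (hW : IsConnSet G W) (hH : IsConnSet G H) (hHW : H ⊆ W) :
    #(W \ H) < #(connBetween G H W) := by
  induction hn : #(W \ H) generalizing H with
  | zero => exact card_pos.2 ⟨H, mem_connBetween.2 ⟨Subset.rfl, hHW, hH⟩⟩
  | succ n ih =>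
    have hssub : H ⊂ W := hHW.ssubset_of_ne (by rintro rfl; simp at hn)
    obtain ⟨a, ha, b, hbW, hbH, hab⟩ := hW.exists_adj_of_ssubset hH.nonempty hssub
    have hinsert : n < #(connBetween G (insert b H) W) :=
      ih (hH.insert_of_adj ha hab) (insert_subset hbW hHW) (by
        rw [sdiff_insert, card_erase_of_mem (mem_sdiff.2 ⟨hbW, hbH⟩), hn, Nat.add_sub_cancel])
    have herase : 0 < #(connBetween G H (W.erase b)) :=
      card_pos.2 ⟨H, mem_connBetween.2 ⟨Subset.rfl, subset_erase.2 ⟨hHW, hbH⟩, hH⟩⟩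
    have hsplit := card_connBetween_split G H W b
    lia

theorem card_le_card_connBetween_singleton (hW : IsConnSet G W) (hv : v ∈ W) :
    #W ≤ #(connBetween G {v} W) := by
  have h := card_sdiff_lt_card_connBetween hW (isConnSet_singleton v) (singleton_subset_iff.2 hv)
  rw [sdiff_singleton_eq_erase, card_erase_of_mem hv] at h
  lia

theorem card_connBetween_mul_le (hAB : A ∩ B ⊆ {v}) (hv : v ∈ H) :
    #(connBetween G {v} A) * #(connBetween G H B) ≤ #(connBetween G H (A ∪ B)) := by
  rw [← card_product]
  refine card_le_card_of_injOn (fun Y ↦ Y.1 ∪ Y.2) (fun Y hY ↦ ?_) fun Y hY Z hZ hYZ ↦ ?_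
  · simp only [coe_product, Set.mem_prod, mem_coe, mem_connBetween, singleton_subset_iff] at hY ⊢
    obtain ⟨⟨hv₁, hA, hY₁⟩, hH, hB, hY₂⟩ := hY
    exact ⟨hH.trans subset_union_right, union_subset_union hA hB,
      hY₁.union hY₂ ⟨v, mem_inter.2 ⟨hv₁, hH hv⟩⟩⟩
  · simp only [coe_product, Set.mem_prod, mem_coe, mem_connBetween, singleton_subset_iff] at hY hZ
    have hmem : ∀ u, u ∈ Y.1 ∨ u ∈ Y.2 ↔ u ∈ Z.1 ∨ u ∈ Z.2 := fun u ↦ by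
      simpa only [mem_union] using Finset.ext_iff.1 hYZ u
    have hinter : ∀ u ∈ A, u ∈ B → u = v := fun u hA hB ↦
      mem_singleton.1 (hAB (mem_inter.2 ⟨hA, hB⟩))
    ext u <;> grind

theorem IsComponent.card_connBetween_insert_mul_le (hC : IsComponent G (W.erase v) C)
    (hv : v ∈ W) (hvH : v ∈ H) :
    #(connBetween G {v} (W \ C)) * #(connBetween G H (insert v C)) ≤ #(connBetween G H W) := by
  have hinter : (W \ C) ∩ insert v C ⊆ {v} := by grind
  simpa only [hC.sdiff_union_insert hv] using card_connBetween_mul_le (G := G) hinter hvH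

theorem card_connBetween_le_insert (hv : v ∉ C) {a : V} (ha : a ∈ H) (hav : G.Adj a v) :
    #(connBetween G H C) ≤ #(connBetween G (insert v H) (insert v C)) := by
  refine card_le_card_of_injOn (insert v) (fun U hU ↦ ?_) fun U hU U' hU' hUU' ↦ ?_
  · obtain ⟨hHU, hUC, hU⟩ := mem_connBetween.1 hU
    exact mem_connBetween.2 ⟨insert_subset_insert v hHU, insert_subset_insert v hUC,
      hU.insert_of_adj (hHU ha) hav⟩
  · have hvU : v ∉ U := fun h ↦ hv ((mem_connBetween.1 hU).2.1 h)
    have hvU' : v ∉ U' := fun h ↦ hv ((mem_connBetween.1 hU').2.1 h)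
    rw [← erase_insert hvU, hUU', erase_insert hvU']

theorem IsComponent.card_sdiff_mul_le (hC : IsComponent G (W.erase v) C) (hW : IsConnSet G W)
    (hv : v ∈ W) {a : V} (ha : a ∈ H) (hav : G.Adj a v) :
    #(W \ C) * #(connBetween G H C) ≤ #(connBetween G (insert v H) W) :=
  calc #(W \ C) * #(connBetween G H C)
      ≤ #(connBetween G {v} (W \ C)) * #(connBetween G (insert v H) (insert v C)) :=
        Nat.mul_le_mul (card_le_card_connBetween_singleton (hC.isConnSet_sdiff hW hv)
          (mem_sdiff.2 ⟨hv, hC.notMem⟩)) (card_connBetween_le_insert hC.notMem ha hav)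
    _ ≤ #(connBetween G (insert v H) W) :=
        hC.card_connBetween_insert_mul_le hv (mem_insert_self v H)

theorem add_mul_card_connBetween_le (hW : IsConnSet G W) (hH : IsConnSet G H) (hHW : H ⊆ W) :
    (#W + #H) * #(connBetween G H W) ≤ 2 * ∑ U ∈ connBetween G H W, #U := by
  induction hn : #W - #H using Nat.strong_induction_on generalizing W H with
  | h n ih =>
  subst hn
  obtain rfl | hssub := hHW.eq_or_ssubset
  · calc (#H + #H) * #(connBetween G H H) = ∑ _U ∈ connBetween G H H, 2 * #H := by
          rw [sum_const, smul_eq_mul]; ring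
      _ ≤ 2 * ∑ U ∈ connBetween G H H, #U := by
          rw [mul_sum]
          exact sum_le_sum fun U hU ↦ Nat.mul_le_mul_left 2 (card_le_card (mem_connBetween.1 hU).1)
  obtain ⟨a, ha, b, hbW, hbH, hab⟩ := hW.exists_adj_of_ssubset hH.nonempty hssub
  obtain ⟨C, hC, hHC⟩ := hH.exists_isComponent (subset_erase.2 ⟨hHW, hbH⟩)
  have hsplit := card_connBetween_split G H W b
  have hsum := sum_connBetween_split G H W b card
  rw [hC.connBetween_eq hH.nonempty hHC] at hsplit hsum
  have hcardH : #(insert b H) = #H + 1 := card_insert_of_notMem hbH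
  have hcardC : #W = #(W \ C) + #C := (card_sdiff_add_card_eq_card hC.subset_of_erase).symm
  have hHW_card : #H < #W := card_lt_card hssub
  have hCW_card : #C < #W :=
    card_lt_card (hC.subset_of_erase.ssubset_of_ne (by rintro rfl; exact hC.notMem hbW))
  have hthrough := ih (#W - #(insert b H)) (by lia) hW (hH.insert_of_adj ha hab)
    (insert_subset hbW hHW) rfl
  have havoid := ih (#C - #H) (by lia) hC.isConnSet hH hHC rfl
  have hcompare := hC.card_sdiff_mul_le hW hbW ha hab
  rw [hcardH] at hthrough
  rw [hsplit, hsum]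
  calc (#W + #H) * (#(connBetween G (insert b H) W) + #(connBetween G H C))
      = (#W + #H) * #(connBetween G (insert b H) W) + #(W \ C) * #(connBetween G H C) +
          (#C + #H) * #(connBetween G H C) := by rw [hcardC]; ring
    _ ≤ (#W + #H) * #(connBetween G (insert b H) W) + #(connBetween G (insert b H) W) +
          (#C + #H) * #(connBetween G H C) := by gcongr
    _ = (#W + (#H + 1)) * #(connBetween G (insert b H) W) +
          (#C + #H) * #(connBetween G H C) := by ring
    _ ≤ 2 * ∑ U ∈ connBetween G (insert b H) W, #U + 2 * ∑ U ∈ connBetween G H C, #U := by gcongr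
    _ = _ := by ring

end Counting

section PairBound

variable {V : Type*} {G : SimpleGraph V} {U W : Finset V} {x : V}

theorem IsConnSet.exists_symmDiff_eq (hW : IsConnSet G W) (hx : x ∈ W) (hU : IsConnSet G U)
    (hUW : U ⊆ W.erase x) :
    ∃ P ∈ connBetween G {x} W, ∃ Q ∈ connBetween G {x} W, P ≠ Q ∧ symmDiff P Q = U := by
  obtain ⟨hUW, hxU⟩ := subset_erase.1 hUW
  obtain ⟨P, hP, hxP⟩ := exists_isComponent_of_mem G (mem_sdiff.2 ⟨hx, hxU⟩)
  obtain ⟨hPW, hdisj⟩ := subset_sdiff.1 hP.subset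
  have hssub : P ⊂ W := hPW.ssubset_of_ne (by
    rintro rfl
    exact hU.nonempty.ne_empty (disjoint_self_iff_empty U |>.1 (hdisj.mono_left hUW)))
  obtain ⟨a, ha, b, hbW, hbP, hab⟩ := hW.exists_adj_of_ssubset hP.isConnSet.nonempty hssub
  have hinsert : IsConnSet G (insert b P) := hP.isConnSet.insert_of_adj ha hab
  have hbU : b ∈ U := by
    by_contra hbU
    have hsub : insert b P ⊆ W \ U := insert_subset (mem_sdiff.2 ⟨hbW, hbU⟩) hP.subset
    exact hbP (hP.subset_of_inter_nonempty hinsert hsub ⟨a, by simp [ha]⟩ (mem_insert_self b P))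
  have hunion : IsConnSet G (P ∪ U) := by
    simpa only [insert_union, insert_eq_of_mem (mem_union_right P hbU)] using
      hinsert.union hU ⟨b, by simp [hbU]⟩
  refine ⟨P, mem_connBetween.2 ⟨singleton_subset_iff.2 hxP, hPW, hP.isConnSet⟩, P ∪ U,
    mem_connBetween.2 ⟨singleton_subset_iff.2 (mem_union_left U hxP), union_subset hPW hUW,
      hunion⟩, fun h ↦ hbP (h ▸ mem_union_right P hbU), ?_⟩
  rw [symmDiff_of_le (show P ≤ P ∪ U from subset_union_left),
    union_sdiff_cancel_left hdisj]

theorem card_connBetween_empty_erase_le_choose_two (hW : IsConnSet G W) (hx : x ∈ W) :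
    #(connBetween G ∅ (W.erase x)) ≤ (#(connBetween G {x} W)).choose 2 := by
  let symmDiffOfPair : Sym2 (Finset V) → Finset V := Sym2.lift ⟨symmDiff, symmDiff_comm⟩
  rw [← Sym2.card_image_offDiag]
  refine le_trans (card_le_card fun U hU ↦ ?_) (card_image_le (f := symmDiffOfPair))
  obtain ⟨-, hUW, hU⟩ := mem_connBetween.1 hU
  obtain ⟨P, hP, Q, hQ, hPQ, hsymm⟩ := hW.exists_symmDiff_eq hx hU hUW
  exact mem_image.2 ⟨s(P, Q), mem_image.2 ⟨(P, Q), mem_offDiag.2 ⟨hP, hQ, hPQ⟩, rfl⟩, hsymm⟩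

end PairBound

section Access

variable {V : Type*} {G : SimpleGraph V} {U W : Finset V} {P : V → Finset V} {x : V}

/-- A choice, for each vertex `p ≠ x` of `W`, of a connected set `P p ⊆ W` through which `p` is
attached to the root `x`. The choice is coherent in the sense that every nonempty `U ⊆ W` missing
`x` can be entered from `x` at some `p ∈ U` without meeting `U` before. -/
structure IsAccessSystem (G : SimpleGraph V) (W : Finset V) (x : V) (P : V → Finset V) : Prop where
  apply_mem : ∀ p ∈ W.erase x, P p ∈ connBetween G {x} (W.erase p)
  isConnSet_insert : ∀ p ∈ W.erase x, IsConnSet G (insert p (P p))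
  exists_disjoint : ∀ U ⊆ W, U.Nonempty → x ∉ U → ∃ p ∈ U, Disjoint (P p) U

theorem isAccessSystem_singleton (G : SimpleGraph V) (x : V) (P : V → Finset V) :
    IsAccessSystem G {x} x P where
  apply_mem p hp := by simp at hp
  isConnSet_insert p hp := by simp at hp
  exists_disjoint U hU hne hx :=
    absurd ((hne.subset_singleton_iff.1 hU) ▸ mem_singleton_self x) hx

theorem IsAccessSystem.update_insert (hP : IsAccessSystem G W x P) (hW : IsConnSet G W)
    (hx : x ∈ W) {a b : V} (ha : a ∈ W) (hb : b ∉ W) (hab : G.Adj a b) :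
    IsAccessSystem G (insert b W) x (Function.update P b W) where
  apply_mem p hp := by
    obtain rfl | hpb := eq_or_ne p b
    · simpa [mem_connBetween, erase_insert hb] using ⟨hx, hW⟩
    · have hp : p ∈ W.erase x := by grind
      rw [Function.update_of_ne hpb]
      exact connBetween_mono_right (erase_subset_erase p (subset_insert b W))
        (hP.apply_mem p hp)
  isConnSet_insert p hp := by
    obtain rfl | hpb := eq_or_ne p b
    · simpa using hW.insert_of_adj ha hab
    · rw [Function.update_of_ne hpb]
      exact hP.isConnSet_insert p (by grind)
  exists_disjoint U hU hne hxU := by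
    obtain hempty | hne' := (U.erase b).eq_empty_or_nonempty
    · obtain rfl : U = {b} := (erase_eq_empty_iff U b).1 hempty |>.resolve_left hne.ne_empty
      exact ⟨b, mem_singleton_self b, by simpa using hb⟩
    · obtain ⟨p, hp, hdisj⟩ := hP.exists_disjoint (U.erase b) (subset_insert_iff.1 hU) hne'
        fun h ↦ hxU (mem_of_mem_erase h)
      have hpW : p ∈ W.erase x := by grind
      obtain ⟨-, hPW, -⟩ := mem_connBetween.1 (hP.apply_mem p hpW)
      refine ⟨p, mem_of_mem_erase hp, ?_⟩
      rw [Function.update_of_ne (ne_of_mem_erase hp), disjoint_left]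
      intro y hy hyU
      exact disjoint_left.1 hdisj hy (mem_erase.2 ⟨by grind, hyU⟩)

theorem IsConnSet.exists_isAccessSystem (hW : IsConnSet G W) (hx : x ∈ W) :
    ∃ P, IsAccessSystem G W x P :=
  hW.induction_on hx ⟨fun _ ↦ ∅, isAccessSystem_singleton G x _⟩
    fun _ hU hxU _ ha _ hb hab ⟨_, hP⟩ ↦ ⟨_, hP.update_insert hU hxU ha hb hab⟩

end Access

section BranchSystem

variable {V : Type*} {G : SimpleGraph V} {C C' K W : Finset V} {D : V → Finset V} {u v : V}

namespace IsComponent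

theorem ssubset_of_mem_of_notMem (hC : IsComponent G (W.erase u) C)
    (hC' : IsComponent G (W.erase v) C') (hW : IsConnSet G W) (hv : v ∈ C) (hu : u ∉ C') :
    C' ⊂ C := by
  have huv : u ≠ v := fun h ↦ hC.notMem (h ▸ hv)
  have hvW : v ∈ W := hC.subset_of_erase hv
  have hsub : insert v C' ⊆ W.erase u :=
    subset_erase.2 ⟨insert_subset hvW hC'.subset_of_erase, by simp [huv, hu]⟩
  refine ssubset_iff.2 ⟨v, hC'.notMem, ?_⟩
  exact hC.subset_of_inter_nonempty (hC'.isConnSet_insert hW hvW) hsub ⟨v, by simp [hv]⟩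

theorem mem_or_mem_of_inter_nonempty (hC : IsComponent G (W.erase u) C)
    (hC' : IsComponent G (W.erase v) C') (hW : IsConnSet G W) (hu : u ∈ W) (huv : u ≠ v)
    (h : (C ∩ C').Nonempty) : u ∈ C' ∨ v ∈ C := by
  by_contra! hmem
  have hsub : insert u C ⊆ W.erase v :=
    subset_erase.2 ⟨insert_subset hu hC.subset_of_erase, by simp [huv.symm, hmem.2]⟩
  have hmeet : (insert u C ∩ C').Nonempty := h.mono (inter_subset_inter_right (subset_insert u C))
  exact hmem.1 (hC'.subset_of_inter_nonempty (hC.isConnSet_insert hW hu) hsub hmeet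
    (mem_insert_self u C))

theorem sdiff_subset_of_mem_of_mem (hC : IsComponent G (W.erase u) C)
    (hC' : IsComponent G (W.erase v) C') (hW : IsConnSet G W) (hv : v ∈ C) (hu : u ∈ C') :
    W \ C ⊆ C' := by
  have huW : u ∈ W := hC'.subset_of_erase hu
  exact hC'.subset_of_inter_nonempty (hC.isConnSet_sdiff hW huW)
    (subset_erase.2 ⟨sdiff_subset, by simp [hv]⟩) ⟨u, by simp [huW, hC.notMem, hu]⟩

end IsComponent

/-- `D x` is a branch of the connected set `W` at `x`, for each `x` in the set of centres `K`; the
branch at one centre contains all the other centres, and no vertex of `W` lies in all branches. -/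
structure IsBranchSystem (G : SimpleGraph V) (W K : Finset V) (D : V → Finset V) : Prop where
  subset : K ⊆ W
  isComponent : ∀ x ∈ K, IsComponent G (W.erase x) (D x)
  mem : ∀ x ∈ K, ∀ y ∈ K, y ≠ x → y ∈ D x
  exists_notMem : ∀ z ∈ W, ∃ x ∈ K, z ∉ D x

theorem exists_isBranchSystem (hW : IsConnSet G W)
    (hD : ∀ w ∈ W, IsComponent G (W.erase w) (D w)) : ∃ K, IsBranchSystem G W K D := by
  obtain ⟨v, hv, hvmin⟩ := exists_min_image W (fun w ↦ #(D w)) hW.nonempty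
  have hmem_v : ∀ w ∈ D v, v ∈ D w := fun w hw ↦ by
    have hwW := (hD v hv).subset_of_erase hw
    by_contra hvw
    exact (hvmin w hwW).not_gt
      (card_lt_card ((hD v hv).ssubset_of_mem_of_notMem (hD w hwW) hW hw hvw))
  let S := insert v (D v)
  have hSW : S ⊆ W := insert_subset hv (hD v hv).subset_of_erase
  -- The branches at the candidates in `S` other than `v` all contain `v`, so any two of them meet.
  -- Hence a candidate whose branch is smallest among those missing a given `z` belongs to the
  -- branch at every other candidate.
  refine ⟨{w ∈ S | ∀ u ∈ S, w ≠ u → w ∈ D u}, (filter_subset _ _).trans hSW,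
    fun x hx ↦ hD x (hSW (mem_filter.1 hx).1),
    fun x hx y hy hne ↦ (mem_filter.1 hy).2 x (mem_filter.1 hx).1 hne, fun z hz ↦ ?_⟩
  have hcand : {u ∈ S | z ∉ D u}.Nonempty := by
    by_cases hzv : z ∈ D v
    · exact ⟨z, mem_filter.2 ⟨mem_insert_of_mem hzv, (hD z hz).notMem⟩⟩
    · exact ⟨v, mem_filter.2 ⟨mem_insert_self v _, hzv⟩⟩
  obtain ⟨u, hu, humin⟩ := exists_min_image _ (fun w ↦ #(D w)) hcand
  obtain ⟨huS, hzu⟩ := mem_filter.1 hu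
  refine ⟨u, mem_filter.2 ⟨huS, fun u' hu'S hne ↦ ?_⟩, hzu⟩
  obtain rfl | huv := mem_insert.1 huS
  · exact hmem_v u' ((mem_insert.1 hu'S).resolve_left hne.symm)
  obtain rfl | hu'v := mem_insert.1 hu'S
  · exact huv
  by_contra hmem
  have hu'u : u' ∈ D u := ((hD u (hSW huS)).mem_or_mem_of_inter_nonempty (hD u' (hSW hu'S)) hW
    (hSW huS) hne ⟨v, mem_inter.2 ⟨hmem_v u huv, hmem_v u' hu'v⟩⟩).resolve_left hmem
  have hssub := (hD u (hSW huS)).ssubset_of_mem_of_notMem (hD u' (hSW hu'S)) hW hu'u hmem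
  exact (humin u' (mem_filter.2 ⟨hu'S, fun h ↦ hzu (hssub.subset h)⟩)).not_gt (card_lt_card hssub)

end BranchSystem

section CentralInequality

variable {V : Type*} {G : SimpleGraph V} {K U W : Finset V} {D P : V → Finset V} {w x z : V}

namespace IsBranchSystem

theorem exists_notMem_of_mem (hS : IsBranchSystem G W K D) (hx : x ∈ K) (hz : z ∈ D x) :
    ∃ w ∈ K.erase x, z ∉ D w := by
  obtain ⟨w, hw, hzw⟩ := hS.exists_notMem z ((hS.isComponent x hx).subset_of_erase hz)
  exact ⟨w, mem_erase.2 ⟨by rintro rfl; exact hzw hz, hw⟩, hzw⟩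

theorem sdiff_subset (hS : IsBranchSystem G W K D) (hW : IsConnSet G W) (hx : x ∈ K)
    (hw : w ∈ K.erase x) : W \ D w ⊆ D x := by
  obtain ⟨hwx, hw⟩ := mem_erase.1 hw
  exact (hS.isComponent w hw).sdiff_subset_of_mem_of_mem (hS.isComponent x hx) hW
    (hS.mem w hw x hx hwx.symm) (hS.mem x hx w hw hwx)

theorem mem_sdiff (hS : IsBranchSystem G W K D) (hw : w ∈ K) : w ∈ W \ D w :=
  Finset.mem_sdiff.2 ⟨hS.subset hw, (hS.isComponent w hw).notMem⟩

theorem card_connBetween_empty_le (hS : IsBranchSystem G W K D) (hx : x ∈ K) :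
    #(connBetween G ∅ (D x)) ≤ #{U ∈ connBetween G ∅ (D x) | (U ∩ K).Nonempty} +
      ∑ w ∈ K.erase x, #(connBetween G ∅ ((W \ D w).erase w)) := by
  rw [← card_filter_add_card_filter_not (s := connBetween G ∅ (D x)) fun U ↦ (U ∩ K).Nonempty]
  refine Nat.add_le_add_left (le_trans (card_le_card fun U hU ↦ ?_) card_biUnion_le) _
  obtain ⟨hU, hUK⟩ := mem_filter.1 hU
  obtain ⟨-, hUD, hU⟩ := mem_connBetween.1 hU
  have hUW : U ⊆ W := hUD.trans (hS.isComponent x hx).subset_of_erase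
  obtain ⟨z, hz⟩ := hU.nonempty
  obtain ⟨w, hw, hzw⟩ := hS.exists_notMem_of_mem hx (hUD hz)
  have hwK : w ∈ K := mem_of_mem_erase hw
  have hwU : w ∉ U := fun h ↦ hUK ⟨w, mem_inter.2 ⟨h, hwK⟩⟩
  have hUDw : Disjoint U (D w) := by
    rw [disjoint_iff_inter_eq_empty, ← not_nonempty_iff_eq_empty]
    exact fun h ↦ hwU ((hS.isComponent w hwK).mem_of_crossing hU hUW h fun hsub ↦ hzw (hsub hz))
  exact mem_biUnion.2 ⟨w, hw, mem_connBetween.2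
    ⟨empty_subset U, subset_erase.2 ⟨subset_sdiff.2 ⟨hUW, hUDw⟩, hwU⟩, hU⟩⟩

theorem card_meeting_le_sum (hS : IsBranchSystem G W K D) (hx : x ∈ K) :
    #{U ∈ connBetween G ∅ (D x) | (U ∩ K).Nonempty} ≤
      ∑ w ∈ K.erase x, #(connBetween G {w} (D x)) := by
  refine le_trans (card_le_card fun U hU ↦ ?_) card_biUnion_le
  obtain ⟨hU, w, hw⟩ := mem_filter.1 hU
  obtain ⟨hwU, hwK⟩ := mem_inter.1 hw
  obtain ⟨-, hUD, hU⟩ := mem_connBetween.1 hU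
  have hwx : w ≠ x := by rintro rfl; exact (hS.isComponent w hx).notMem (hUD hwU)
  exact mem_biUnion.2 ⟨w, mem_erase.2 ⟨hwx, hwK⟩,
    mem_connBetween.2 ⟨singleton_subset_iff.2 hwU, hUD, hU⟩⟩

/-- The entrance `p` of `U` from the root `x` lies outside some branch `D w`. If `p` were not the
gate `w` of that branch, then `w` would belong both to `U` and to the access set of `p`. -/
theorem exists_disjoint_access (hS : IsBranchSystem G W K D) (hx : x ∈ K)
    (hP : IsAccessSystem G (insert x (D x)) x P) (hU : IsConnSet G U) (hUD : U ⊆ D x)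
    (hUK : (U ∩ K).Nonempty) : ∃ w ∈ K.erase x, w ∈ U ∧ Disjoint (P w) U := by
  have hDx := hS.isComponent x hx
  have hxW := hS.subset hx
  obtain ⟨p, hpU, hdisj⟩ := hP.exists_disjoint U (hUD.trans (subset_insert x _)) hU.nonempty
    fun h ↦ hDx.notMem (hUD h)
  obtain ⟨w, hw, hpw⟩ := hS.exists_notMem_of_mem hx (hUD hpU)
  obtain ⟨hwx, hwK⟩ := mem_erase.1 hw
  suffices hwp : w = p by subst hwp; exact ⟨w, hw, hpU, hdisj⟩
  by_contra hwp
  have hpD : p ∈ (insert x (D x)).erase x := by rw [erase_insert hDx.notMem]; exact hUD hpU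
  obtain ⟨hxP, hPD, -⟩ := mem_connBetween.1 (hP.apply_mem p hpD)
  have hsub : insert p (P p) ⊆ W :=
    (insert_subset (mem_of_mem_erase hpD) (hPD.trans (erase_subset p _))).trans
      (insert_subset hxW hDx.subset_of_erase)
  have hwP : w ∈ insert p (P p) :=
    (hS.isComponent w hwK).mem_of_crossing (hP.isConnSet_insert p hpD) hsub
      ⟨x, by simp [singleton_subset_iff.1 hxP, hS.mem w hwK x hx hwx.symm]⟩
      fun h ↦ hpw (h (mem_insert_self p _))
  have hwU : w ∈ U := by
    obtain ⟨k, hk⟩ := hUK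
    obtain ⟨hkU, hkK⟩ := mem_inter.1 hk
    obtain rfl | hkw := eq_or_ne k w
    · exact hkU
    · exact (hS.isComponent w hwK).mem_of_crossing hU (hUD.trans hDx.subset_of_erase)
        ⟨k, mem_inter.2 ⟨hkU, hS.mem w hwK k hkK hkw⟩⟩ fun h ↦ hpw (h hpU)
  exact disjoint_left.1 hdisj ((mem_insert.1 hwP).resolve_left hwp) hwU

end IsBranchSystem

theorem IsAccessSystem.union_mem_connBetween (hP : IsAccessSystem G W x P) (hw : w ∈ W.erase x)
    (hU : U ∈ connBetween G {w} W) : U ∪ P w ∈ connBetween G {w, x} W := by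
  obtain ⟨hwU, hUW, hU⟩ := mem_connBetween.1 hU
  obtain ⟨hxP, hPW, -⟩ := mem_connBetween.1 (hP.apply_mem w hw)
  rw [singleton_subset_iff] at hwU hxP
  have hunion : IsConnSet G (U ∪ insert w (P w)) :=
    hU.union (hP.isConnSet_insert w hw) ⟨w, by simp [hwU]⟩
  rw [union_insert, insert_eq_of_mem (mem_union_left _ hwU)] at hunion
  exact mem_connBetween.2 ⟨by simp [insert_subset_iff, hwU, hxP],
    union_subset hUW (hPW.trans (erase_subset w W)), hunion⟩

namespace IsBranchSystem

theorem card_meeting_le_sum_insert (hS : IsBranchSystem G W K D) (hW : IsConnSet G W)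
    (hx : x ∈ K) :
    #{U ∈ connBetween G ∅ (D x) | (U ∩ K).Nonempty} ≤
      ∑ w ∈ K.erase x, #(connBetween G {w, x} (insert x (D x))) := by
  have hDx := hS.isComponent x hx
  obtain ⟨P, hP⟩ := (hDx.isConnSet_insert hW (hS.subset hx)).exists_isAccessSystem
    (mem_insert_self x (D x))
  calc _ ≤ #((K.erase x).biUnion fun w ↦
          (connBetween G {w, x} (insert x (D x))).image (· \ P w)) := card_le_card fun U hU ↦ ?_
    _ ≤ ∑ w ∈ K.erase x, #((connBetween G {w, x} (insert x (D x))).image (· \ P w)) :=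
        card_biUnion_le
    _ ≤ _ := sum_le_sum fun w _ ↦ card_image_le
  obtain ⟨hU, hUK⟩ := mem_filter.1 hU
  obtain ⟨-, hUD, hU⟩ := mem_connBetween.1 hU
  obtain ⟨w, hw, hwU, hdisj⟩ := hS.exists_disjoint_access hx hP hU hUD hUK
  have hwD : w ∈ (insert x (D x)).erase x := by rw [erase_insert hDx.notMem]; exact hUD hwU
  refine mem_biUnion.2 ⟨w, hw, mem_image.2 ⟨U ∪ P w, hP.union_mem_connBetween hwD ?_, ?_⟩⟩
  · exact mem_connBetween.2
      ⟨singleton_subset_iff.2 hwU, hUD.trans (subset_insert x _), hU⟩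
  · exact union_sdiff_cancel_right hdisj.symm

theorem card_sdiff_le_card_insert (hS : IsBranchSystem G W K D) (hW : IsConnSet G W) (hx : x ∈ K)
    (hw : w ∈ K.erase x) :
    #(connBetween G {w} (W \ D w)) ≤ #(connBetween G {w, x} (insert x (D x))) := by
  have hDx := hS.isComponent x hx
  obtain ⟨hwx, hwK⟩ := mem_erase.1 hw
  have hwD : w ∈ (insert x (D x)).erase x := by
    rw [erase_insert hDx.notMem]; exact hS.mem x hx w hwK hwx
  have hDW : insert x (D x) ⊆ W := insert_subset (hS.subset hx) hDx.subset_of_erase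
  obtain ⟨P, hP⟩ := (hDx.isConnSet_insert hW (hS.subset hx)).exists_isAccessSystem
    (mem_insert_self x (D x))
  have hPDw : P w ⊆ D w := by
    obtain ⟨hxP, hPD, hPw⟩ := mem_connBetween.1 (hP.apply_mem w hwD)
    exact (hS.isComponent w hwK).subset_of_inter_nonempty hPw
      (hPD.trans (erase_subset_erase w hDW))
      ⟨x, mem_inter.2 ⟨singleton_subset_iff.1 hxP, hS.mem w hwK x hx hwx.symm⟩⟩
  have hdisj : ∀ U ∈ connBetween G {w} (W \ D w), Disjoint U (P w) := fun U hU ↦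
    (subset_sdiff.1 (mem_connBetween.1 hU).2.1).2.mono_right hPDw
  refine card_le_card_of_injOn (· ∪ P w) (fun U hU ↦ hP.union_mem_connBetween hwD
    (connBetween_mono_right ((hS.sdiff_subset hW hx hw).trans (subset_insert x _)) hU)) ?_
  intro U hU U' hU' hUU'
  rw [← union_sdiff_cancel_right (hdisj U hU), ← union_sdiff_cancel_right (hdisj U' hU')]
  exact congrArg (· \ P w) hUU'

theorem card_add_card_mul_card_le (hS : IsBranchSystem G W K D) (hx : x ∈ K) (hw : w ∈ K.erase x) :
    #(connBetween G {w} (D x)) +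
        #(connBetween G {x} (W \ D x)) * #(connBetween G {w, x} (insert x (D x))) ≤
      #(connBetween G {w} W) := by
  obtain ⟨hwx, hwK⟩ := mem_erase.1 hw
  have hDx := hS.isComponent x hx
  have hproduct := hDx.card_connBetween_insert_mul_le (H := {w, x}) (hS.subset hx) (by simp)
  have hsplit := card_connBetween_split G {w} W x
  rw [hDx.connBetween_eq (singleton_nonempty w)
    (singleton_subset_iff.2 (hS.mem x hx w hwK hwx)), pair_comm] at hsplit
  lia

/-- The left-hand side is the contribution of `w` to the estimate of
`2 * (b + 1) * #(connBetween G ∅ (D x))`, where `b = #(connBetween G {x} (W \ D x))`: sets meeting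
`K` are counted twice as sets through `w` and `2 * b` times as sets through `w` and `x`, and sets
missing `K` avoid some branch `D w`. -/
theorem branch_contribution_le (hS : IsBranchSystem G W K D) (hW : IsConnSet G W) (hx : x ∈ K)
    (hw : w ∈ K.erase x) :
    2 * #(connBetween G {w} (D x)) +
        2 * #(connBetween G {x} (W \ D x)) * #(connBetween G {w, x} (insert x (D x))) +
        2 * (#(connBetween G {x} (W \ D x)) + 1) * #(connBetween G ∅ ((W \ D w).erase w)) ≤
      (#(connBetween G {w} (W \ D w)) + 1) * #(connBetween G {w} W) := by
  have hwK := mem_of_mem_erase hw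
  have hproduct := hS.card_add_card_mul_card_le hx hw
  have hinside : #(connBetween G {w} (W \ D w)) ≤ #(connBetween G {w} (D x)) :=
    card_le_card (connBetween_mono_right (hS.sdiff_subset hW hx hw))
  have hthrough := hS.card_sdiff_le_card_insert hW hx hw
  have hpairs := card_connBetween_empty_erase_le_choose_two
    ((hS.isComponent w hwK).isConnSet_sdiff hW (hS.subset hwK)) (hS.mem_sdiff hwK)
  have hpos : 0 < #(connBetween G {w} (W \ D w)) :=
    card_pos.2 ⟨{w}, mem_connBetween.2
      ⟨Subset.rfl, singleton_subset_iff.2 (hS.mem_sdiff hwK), isConnSet_singleton w⟩⟩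
  obtain ⟨m, hm⟩ := Nat.exists_eq_add_one.2 hpos
  rw [hm] at hinside hthrough hpairs ⊢
  generalize #(connBetween G {w} (D x)) = n₁ at *
  generalize #(connBetween G {w, x} (insert x (D x))) = n₂ at *
  generalize #(connBetween G {x} (W \ D x)) = b at *
  have hpairs' : 2 * #(connBetween G ∅ ((W \ D w).erase w)) ≤ (m + 1) * m := by
    rw [Nat.choose_two_right, Nat.add_sub_cancel, Nat.le_div_iff_mul_le two_pos] at hpairs
    lia
  calc _ = 2 * (n₁ + b * n₂) + (b + 1) * (2 * #(connBetween G ∅ ((W \ D w).erase w))) := by ring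
    _ ≤ 2 * (n₁ + b * n₂) + (b + 1) * ((m + 1) * m) := by gcongr
    _ = 2 * (n₁ + b * n₂) + m * ((m + 1) + b * (m + 1)) := by ring
    _ ≤ 2 * (n₁ + b * n₂) + m * (n₁ + b * n₂) := by gcongr
    _ = (m + 1 + 1) * (n₁ + b * n₂) := by ring
    _ ≤ (m + 1 + 1) * #(connBetween G {w} W) := by gcongr

theorem two_mul_succ_mul_card_le_sum (hS : IsBranchSystem G W K D) (hW : IsConnSet G W)
    (hx : x ∈ K) :
    2 * (#(connBetween G {x} (W \ D x)) + 1) * #(connBetween G ∅ (D x)) ≤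
      ∑ w ∈ K.erase x, (#(connBetween G {w} (W \ D w)) + 1) * #(connBetween G {w} W) := by
  have hbound := hS.card_connBetween_empty_le hx
  have hinside := hS.card_meeting_le_sum hx
  have hthrough := hS.card_meeting_le_sum_insert hW hx
  refine le_trans ?_ (sum_le_sum fun w hw ↦ hS.branch_contribution_le hW hx hw)
  simp only [sum_add_distrib, ← mul_sum]
  generalize #(connBetween G {x} (W \ D x)) = b at *
  generalize #{U ∈ connBetween G ∅ (D x) | (U ∩ K).Nonempty} = m at *
  calc 2 * (b + 1) * #(connBetween G ∅ (D x))
      ≤ 2 * (b + 1) * (m + ∑ w ∈ K.erase x, #(connBetween G ∅ ((W \ D w).erase w))) := by gcongr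
    _ = 2 * m + 2 * b * m +
          2 * (b + 1) * ∑ w ∈ K.erase x, #(connBetween G ∅ ((W \ D w).erase w)) := by ring
    _ ≤ _ := by gcongr

theorem sum_card_sdiff_le (hS : IsBranchSystem G W K D) (hW : IsConnSet G W) (hx : x ∈ K) :
    ∑ y ∈ K.erase x, #(W \ D y) ≤ #(D x) := by
  rw [← card_biUnion]
  · exact card_le_card (biUnion_subset.2 fun y hy ↦ hS.sdiff_subset hW hx hy)
  · intro y hy z hz hyz
    have hyK := mem_of_mem_erase hy
    exact disjoint_sdiff.mono_left (hS.sdiff_subset hW (mem_of_mem_erase hz)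
      (mem_erase.2 ⟨hyz, hyK⟩))

theorem exists_two_mul_card_sdiff_mul_le (hS : IsBranchSystem G W K D) (hW : IsConnSet G W) :
    ∃ x ∈ K, 2 * #(W \ D x) * #(connBetween G ∅ (D x)) ≤ #(D x) * #(connBetween G {x} W) := by
  obtain ⟨z, hz⟩ := hW.nonempty
  obtain ⟨x₀, hx₀, -⟩ := hS.exists_notMem z hz
  let weight : V → ℕ := fun w ↦ #(connBetween G {w} (W \ D w)) + 1
  suffices h : ∃ x ∈ K, weight x * (2 * #(W \ D x) * #(connBetween G ∅ (D x))) ≤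
      weight x * (#(D x) * #(connBetween G {x} W)) by
    obtain ⟨x, hx, hle⟩ := h
    exact ⟨x, hx, Nat.le_of_mul_le_mul_left hle (Nat.succ_pos _)⟩
  refine exists_le_of_sum_le ⟨x₀, hx₀⟩ ?_
  calc ∑ x ∈ K, weight x * (2 * #(W \ D x) * #(connBetween G ∅ (D x)))
      = ∑ x ∈ K, #(W \ D x) * (2 * weight x * #(connBetween G ∅ (D x))) :=
        sum_congr rfl fun x _ ↦ by ring
    _ ≤ ∑ x ∈ K, #(W \ D x) * ∑ w ∈ K.erase x, weight w * #(connBetween G {w} W) :=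
        sum_le_sum fun x hx ↦ Nat.mul_le_mul_left _ (hS.two_mul_succ_mul_card_le_sum hW hx)
    _ = ∑ w ∈ K, (∑ x ∈ K.erase w, #(W \ D x)) * (weight w * #(connBetween G {w} W)) := by
        simp only [mul_sum, sum_mul]
        exact sum_comm' fun x w ↦ by grind
    _ ≤ ∑ w ∈ K, #(D w) * (weight w * #(connBetween G {w} W)) :=
        sum_le_sum fun w hw ↦ Nat.mul_le_mul_right _ (hS.sum_card_sdiff_le hW hw)
    _ = ∑ w ∈ K, weight w * (#(D w) * #(connBetween G {w} W)) :=
        sum_congr rfl fun w _ ↦ by ring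

end IsBranchSystem

theorem IsConnSet.exists_forall_isComponent_two_mul_card_sdiff_mul_le (hW : IsConnSet G W) :
    ∃ v ∈ W, ∀ C, IsComponent G (W.erase v) C →
      2 * #(W \ C) * #(connBetween G ∅ C) ≤ #C * #(connBetween G {v} W) := by
  by_contra! hbad
  choose! D hD hbad using hbad
  obtain ⟨K, hS⟩ := exists_isBranchSystem hW hD
  obtain ⟨x, hx, hle⟩ := hS.exists_two_mul_card_sdiff_mul_le hW
  exact (hbad x (hS.subset hx)).not_ge hle

end CentralInequality

section Excess

variable {V : Type*} {G : SimpleGraph V} {W : Finset V} {v : V}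

/-- Three times the total amount by which the sizes of the connected subsets of `W` exceed
`(#W + 2) / 3`: the average size is at least `(#W + 2) / 3` iff the excess is nonnegative. -/
noncomputable def excess (G : SimpleGraph V) (W : Finset V) : ℤ :=
  3 * ∑ U ∈ connBetween G ∅ W, (#U : ℤ) - (#W + 2) * #(connBetween G ∅ W)

theorem two_mul_excess (G : SimpleGraph V) (hv : v ∈ W) :
    2 * excess G W =
      3 * (2 * ∑ U ∈ connBetween G {v} W, (#U : ℤ) - (#W + 1) * #(connBetween G {v} W)) +
      ∑ C ∈ components G (W.erase v), (2 * excess G C +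
        (#C * #(connBetween G {v} W) - 2 * #(W \ C) * #(connBetween G ∅ C))) := by
  have hsum := sum_connBetween_split G ∅ W v fun U ↦ (#U : ℤ)
  have hcount := sum_connBetween_split G ∅ W v fun _ ↦ (1 : ℤ)
  rw [insert_empty_eq, sum_connBetween_empty_eq_sum_components G (W.erase v)] at hsum hcount
  simp only [sum_const, nsmul_one] at hcount
  have hcard : ∑ C ∈ components G (W.erase v), (#C : ℤ) = #W - 1 := by
    rw [← Nat.cast_sum, sum_card_components, cast_card_erase_of_mem hv]
  have hterm : ∀ C ∈ components G (W.erase v), 2 * excess G C +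
      (#C * #(connBetween G {v} W) - 2 * #(W \ C) * #(connBetween G ∅ C)) =
        6 * ∑ U ∈ connBetween G ∅ C, (#U : ℤ) + #C * #(connBetween G {v} W) -
          2 * (#W + 2) * #(connBetween G ∅ C) := fun C hC ↦ by
    rw [excess, cast_card_sdiff (mem_components.1 hC).subset_of_erase]
    ring
  rw [sum_congr rfl hterm, excess, hsum, hcount, sum_sub_distrib, sum_add_distrib, ← mul_sum,
    ← mul_sum, ← sum_mul, hcard]
  ring

theorem IsConnSet.card_add_one_mul_card_connBetween_singleton_le (hW : IsConnSet G W)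
    (hv : v ∈ W) :
    (#W + 1) * #(connBetween G {v} W) ≤ 2 * ∑ U ∈ connBetween G {v} W, (#U : ℤ) := by
  have h := add_mul_card_connBetween_le hW (isConnSet_singleton v) (singleton_subset_iff.2 hv)
  rw [card_singleton] at h
  exact_mod_cast h

theorem IsConnSet.excess_nonneg (hW : IsConnSet G W) : 0 ≤ excess G W := by
  induction hn : #W using Nat.strong_induction_on generalizing W with
  | h n ih =>
  obtain ⟨v, hv, hbranch⟩ := hW.exists_forall_isComponent_two_mul_card_sdiff_mul_le
  suffices h : 0 ≤ 2 * excess G W by linarith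
  rw [two_mul_excess G hv]
  have hthrough := hW.card_add_one_mul_card_connBetween_singleton_le hv
  refine add_nonneg (by linarith) (sum_nonneg fun C hC ↦ ?_)
  rw [mem_components] at hC
  have hlt : #C < n := hn ▸ card_lt_card (hC.subset.trans_ssubset (erase_ssubset hv))
  have hexcess := ih _ hlt hC.isConnSet rfl
  have hcompare := hbranch C hC
  zify at hcompare
  linarith

theorem IsConnSet.exists_tight_of_excess_eq_zero (hW : IsConnSet G W) (h : excess G W = 0) :
    ∃ v ∈ W, ∀ C, IsComponent G (W.erase v) C →
      excess G C = 0 ∧ 2 * #(W \ C) * #(connBetween G ∅ C) = #C * #(connBetween G {v} W) := by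
  obtain ⟨v, hv, hbranch⟩ := hW.exists_forall_isComponent_two_mul_card_sdiff_mul_le
  refine ⟨v, hv, fun C hC ↦ ?_⟩
  have hthrough := hW.card_add_one_mul_card_connBetween_singleton_le hv
  have hterm : ∀ D ∈ components G (W.erase v), 0 ≤ 2 * excess G D +
      (#D * #(connBetween G {v} W) - 2 * #(W \ D) * #(connBetween G ∅ D) : ℤ) := fun D hD ↦ by
    rw [mem_components] at hD
    have hexcess := hD.isConnSet.excess_nonneg
    have hcompare := hbranch D hD
    zify at hcompare
    linarith
  have hle := single_le_sum hterm (mem_components.2 hC)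
  have hsplit := two_mul_excess G hv
  have hexcess := hC.isConnSet.excess_nonneg
  have hcompare := hbranch C hC
  constructor <;> zify at hcompare ⊢ <;> linarith

end Excess

section Paths

variable {V : Type*} {G : SimpleGraph V} {C H W W₁ W₂ : Finset V} {v w x y : V}

/-- `G[W]` is a path with end vertex `x`. The constructor `insert` attaches to a path on `W` a new
vertex `y`, adjacent in `W` to the end `x` only. -/
inductive IsPathWithEnd (G : SimpleGraph V) : Finset V → V → Prop
  | singleton (x : V) : IsPathWithEnd G {x} x
  | insert {W : Finset V} {x y : V} (h : IsPathWithEnd G W x) (hy : y ∉ W) (hxy : G.Adj x y)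
      (huniq : ∀ z ∈ W, G.Adj y z → z = x) : IsPathWithEnd G (insert y W) y

theorem IsPathWithEnd.end_mem (h : IsPathWithEnd G W x) : x ∈ W := by
  cases h <;> simp

theorem connBetween_singleton_right (hH : H ⊆ {x}) : connBetween G H {x} = {{x}} := by
  ext U
  simp only [mem_connBetween, mem_singleton]
  refine ⟨fun ⟨_, hUx, hU⟩ ↦ hU.nonempty.subset_singleton_iff.1 hUx, ?_⟩
  rintro rfl
  exact ⟨hH, Subset.rfl, isConnSet_singleton x⟩

theorem connBetween_singleton_insert (hxy : G.Adj x y)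
    (huniq : ∀ z ∈ W, G.Adj y z → z = x) :
    connBetween G {y} (insert y W) = insert {y} ((connBetween G {x} W).image (insert y)) := by
  ext U
  simp only [mem_insert, mem_image, mem_connBetween, singleton_subset_iff]
  constructor
  · rintro ⟨hyU, hUW, hU⟩
    refine or_iff_not_imp_left.2 fun hne ↦ ⟨U.erase y, ?_, insert_erase hyU⟩
    have heraseW : U.erase y ⊆ W := subset_insert_iff.1 hUW
    have huniqU : ∀ z ∈ U, G.Adj y z → z = x := fun z hz hyz ↦
      huniq z (heraseW (mem_erase.2 ⟨hyz.ne', hz⟩)) hyz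
    have hssub : {y} ⊂ U := (singleton_subset_iff.2 hyU).ssubset_of_ne (Ne.symm hne)
    obtain ⟨a, ha, b, hbU, -, hab⟩ := hU.exists_adj_of_ssubset (singleton_nonempty y) hssub
    obtain rfl := mem_singleton.1 ha
    obtain rfl := huniqU b hbU hab
    have hb : b ∈ U.erase a := mem_erase.2 ⟨hab.ne', hbU⟩
    exact ⟨hb, heraseW, hU.erase_of_forall_adj_eq hyU hb huniqU⟩
  · rintro (rfl | ⟨U, ⟨hxU, hUW, hU⟩, rfl⟩)
    · simp [isConnSet_singleton]
    · exact ⟨mem_insert_self y U, insert_subset_insert y hUW, hU.insert_of_adj hxU hxy⟩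

theorem sum_connBetween_singleton_insert {M : Type*} [AddCommMonoid M] (hx : x ∈ W) (hy : y ∉ W)
    (hxy : G.Adj x y) (huniq : ∀ z ∈ W, G.Adj y z → z = x) (f : Finset V → M) :
    ∑ U ∈ connBetween G {y} (insert y W), f U =
      f {y} + ∑ U ∈ connBetween G {x} W, f (insert y U) := by
  have hnotMem : ∀ U ∈ connBetween G {x} W, y ∉ U :=
    fun U hU hyU ↦ hy ((mem_connBetween.1 hU).2.1 hyU)
  rw [connBetween_singleton_insert hxy huniq, sum_insert, sum_image]
  · intro U hU U' hU' hUU'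
    rw [← erase_insert (hnotMem U hU), hUU', erase_insert (hnotMem U' hU')]
  · simp only [mem_image, mem_connBetween, singleton_subset_iff]
    rintro ⟨U, ⟨hxU, -, -⟩, hyU⟩
    exact hy (mem_singleton.1 (hyU ▸ mem_insert_of_mem hxU) ▸ hx)

theorem card_connBetween_singleton_insert (hx : x ∈ W) (hy : y ∉ W) (hxy : G.Adj x y)
    (huniq : ∀ z ∈ W, G.Adj y z → z = x) :
    #(connBetween G {y} (insert y W)) = #(connBetween G {x} W) + 1 := by
  simpa only [card_eq_sum_ones, add_comm] using
    sum_connBetween_singleton_insert hx hy hxy huniq fun _ ↦ 1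

namespace IsPathWithEnd

theorem card_connBetween_end (h : IsPathWithEnd G W x) : #(connBetween G {x} W) = #W := by
  induction h with
  | singleton x => simp [connBetween_singleton_right]
  | insert h hy hxy huniq ih =>
    rw [card_connBetween_singleton_insert h.end_mem hy hxy huniq, ih, card_insert_of_notMem hy]

theorem two_mul_sum_card_connBetween_end (h : IsPathWithEnd G W x) :
    2 * ∑ U ∈ connBetween G {x} W, #U = #W * (#W + 1) := by
  induction h with
  | singleton x => simp [connBetween_singleton_right]
  | @insert W x y h hy hxy huniq ih =>
    have hcard : ∀ U ∈ connBetween G {x} W, #(Insert.insert y U) = #U + 1 := fun U hU ↦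
      card_insert_of_notMem fun hyU ↦ hy ((mem_connBetween.1 hU).2.1 hyU)
    rw [sum_connBetween_singleton_insert h.end_mem hy hxy huniq, sum_congr rfl hcard,
      sum_add_distrib, ← card_eq_sum_ones, h.card_connBetween_end, card_insert_of_notMem hy,
      card_singleton]
    linarith

theorem two_mul_card_connBetween_empty (h : IsPathWithEnd G W x) :
    2 * #(connBetween G ∅ W) = #W * (#W + 1) := by
  induction h with
  | singleton x => simp [connBetween_singleton_right]
  | @insert W x y h hy hxy huniq ih =>
    have hend := (h.insert hy hxy huniq).card_connBetween_end
    have hsplit := card_connBetween_split G ∅ (Insert.insert y W) y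
    rw [insert_empty_eq, erase_insert hy, hend] at hsplit
    rw [hsplit, mul_add, ih, card_insert_of_notMem hy]
    ring

theorem excess_eq_zero (h : IsPathWithEnd G W x) : excess G W = 0 := by
  induction h with
  | singleton x => simp [excess, connBetween_singleton_right]
  | @insert W x y h hy hxy huniq ih =>
    have hpath := h.insert hy hxy huniq
    have hend := hpath.card_connBetween_end
    have hsum_end := hpath.two_mul_sum_card_connBetween_end
    have hsplit := sum_connBetween_split G ∅ (Insert.insert y W) y fun U ↦ (#U : ℤ)
    have hcount := card_connBetween_split G ∅ (Insert.insert y W) y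
    have hcard := h.two_mul_card_connBetween_empty
    rw [insert_empty_eq, erase_insert hy] at hsplit hcount
    rw [excess, hsplit, hcount, hend]
    rw [excess] at ih
    rw [card_insert_of_notMem hy] at *
    zify at hsum_end hcard
    push_cast
    linarith

end IsPathWithEnd

theorem IsConnSet.eq_of_adj_of_card_connBetween_le (hW : IsConnSet G W) (hv : v ∈ W)
    (hcard : #(connBetween G {v} W) ≤ #W) (hw : w ∈ W) (hvw : G.Adj v w) (hx : x ∈ W)
    (hvx : G.Adj v x) : x = w := by
  by_contra hxw
  have hpair : ({w, v} : Finset V) ⊆ W := insert_subset hw (singleton_subset_iff.2 hv)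
  have hthrough := card_sdiff_lt_card_connBetween hW (isConnSet_pair hvw.symm) hpair
  rw [card_sdiff_of_subset hpair, card_pair hvw.ne'] at hthrough
  have hsplit := card_connBetween_split G {v} W w
  have havoid : #(connBetween G {v} (W.erase w)) ≤ 1 := by lia
  have hsingleton_mem : {v} ∈ connBetween G {v} (W.erase w) :=
    mem_connBetween.2 ⟨Subset.rfl, by simp [hv, hvw.ne], isConnSet_singleton v⟩
  have hpair_mem : {x, v} ∈ connBetween G {v} (W.erase w) :=
    mem_connBetween.2 ⟨by simp, by simp [insert_subset_iff, hx, hxw, hv, hvw.ne],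
      isConnSet_pair hvx.symm⟩
  have hpair_eq := card_le_one.1 havoid _ hpair_mem _ hsingleton_mem
  exact hvx.ne' (mem_singleton.1 (hpair_eq ▸ mem_insert_self x {v}))

namespace IsPathWithEnd

theorem of_card_connBetween_le (hW : IsConnSet G W) (hv : v ∈ W)
    (hcard : #(connBetween G {v} W) ≤ #W) : IsPathWithEnd G W v := by
  induction hn : #W generalizing W v with
  | zero => simp [card_eq_zero.1 hn] at hv
  | succ n ih =>
  obtain rfl | hssub := (singleton_subset_iff.2 hv).eq_or_ssubset
  · exact singleton v
  obtain ⟨_, ha, w, hw, -, hvw⟩ := hW.exists_adj_of_ssubset (singleton_nonempty v) hssub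
  rw [mem_singleton.1 ha] at hvw
  have huniq : ∀ z ∈ W, G.Adj v z → z = w := fun z hz hvz ↦
    hW.eq_of_adj_of_card_connBetween_le hv hcard hw hvw hz hvz
  have huniq_erase : ∀ z ∈ W.erase v, G.Adj v z → z = w := fun z hz ↦
    huniq z (mem_of_mem_erase hz)
  have hw_erase : w ∈ W.erase v := mem_erase.2 ⟨hvw.ne', hw⟩
  have hcount := card_connBetween_singleton_insert hw_erase (notMem_erase v W) hvw.symm huniq_erase
  rw [insert_erase hv] at hcount
  have hcard_erase := card_erase_of_mem hv
  have hpath : IsPathWithEnd G (W.erase v) w :=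
    ih (hW.erase_of_forall_adj_eq hv hw_erase huniq) hw_erase (by lia) (by lia)
  exact insert_erase hv ▸ hpath.insert (notMem_erase v W) hvw.symm huniq_erase

theorem exists_union (h₁ : IsPathWithEnd G W₁ v) (h₂ : IsPathWithEnd G W₂ v)
    (hinter : ∀ a ∈ W₁, a ∈ W₂ → a = v)
    (hadj : ∀ a ∈ W₁, ∀ b ∈ W₂, G.Adj a b → a = v ∨ b = v) :
    ∃ e, IsPathWithEnd G (W₁ ∪ W₂) e := by
  induction h₁ generalizing W₂ with
  | singleton v => exact ⟨v, by rwa [union_eq_right.2 (singleton_subset_iff.2 h₂.end_mem)]⟩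
  | @insert W x y h hy hxy huniq ih =>
    have hxW₂ : x ∉ W₂ := fun hx ↦
      hxy.ne (hinter x (mem_insert_of_mem h.end_mem) hx)
    have hadj' : ∀ a ∈ W, ∀ b ∈ W₂, G.Adj a b → a = x ∧ b = y := fun a ha b hb hab ↦ by
      have hay : a ≠ y := by rintro rfl; exact hy ha
      have hby := (hadj a (mem_insert_of_mem ha) b hb hab).resolve_left hay
      subst hby
      exact ⟨huniq a ha hab.symm, rfl⟩
    have hmoved : IsPathWithEnd G (Insert.insert x W₂) x :=
      h₂.insert hxW₂ hxy.symm fun z hz hxz ↦ (hadj' x h.end_mem z hz hxz).2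
    have hunion : Insert.insert y W ∪ W₂ = W ∪ Insert.insert x W₂ := by
      rw [insert_union, union_insert, insert_eq_of_mem (mem_union_left _ h.end_mem),
        insert_eq_of_mem (mem_union_right _ h₂.end_mem)]
    rw [hunion]
    refine ih hmoved (fun a ha haW₂ ↦ ?_) fun a ha b hb hab ↦ ?_
    · obtain hax | haW₂ := mem_insert.1 haW₂
      · exact hax
      · exact absurd (hinter a (mem_insert_of_mem ha) haW₂ ▸ ha) hy
    · obtain hbx | hbW₂ := mem_insert.1 hb
      · exact .inr hbx
      · exact .inl (hadj' a ha b hbW₂ hab).1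

end IsPathWithEnd

theorem IsComponent.exists_isPathWithEnd_of_sdiff_of_insert (hC : IsComponent G (W.erase v) C)
    (hv : v ∈ W) (hrest : IsPathWithEnd G (W \ C) v) (hinsert : IsPathWithEnd G (insert v C) v) :
    ∃ e, IsPathWithEnd G W e := by
  refine hC.sdiff_union_insert hv ▸
    hrest.exists_union hinsert (fun a ha haC ↦ ?_) fun a ha b hb hab ↦ ?_
  · exact (mem_insert.1 haC).resolve_right (mem_sdiff.1 ha).2
  · refine or_iff_not_imp_right.2 fun hbv ↦ ?_
    obtain ⟨haW, haC⟩ := mem_sdiff.1 ha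
    have hbC : b ∈ C := (mem_insert.1 hb).resolve_left hbv
    exact hC.eq_of_adj hbC haW haC hab.symm

theorem IsComponent.exists_isPathWithEnd_of_tight (hC : IsComponent G (W.erase v) C)
    (hW : IsConnSet G W) (hv : v ∈ W) (hx : IsPathWithEnd G C x)
    (htight : 2 * #(W \ C) * #(connBetween G ∅ C) = #C * #(connBetween G {v} W)) :
    ∃ e, IsPathWithEnd G W e := by
  have hv_rest : v ∈ W \ C := mem_sdiff.2 ⟨hv, hC.notMem⟩
  have hcard_insert : #(insert v C) = #C + 1 := card_insert_of_notMem hC.notMem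
  have hcount : #(connBetween G {v} W) = #(W \ C) * #(insert v C) := by
    refine Nat.eq_of_mul_eq_mul_left (card_pos.2 hC.isConnSet.nonempty) ?_
    calc #C * #(connBetween G {v} W) = #(W \ C) * (2 * #(connBetween G ∅ C)) := by
          rw [← htight]; ring
      _ = #C * (#(W \ C) * #(insert v C)) := by
          rw [hx.two_mul_card_connBetween_empty, hcard_insert]; ring
  have hrest_conn := hC.isConnSet_sdiff hW hv
  have hinsert_conn := hC.isConnSet_insert hW hv
  have hrest_le := card_le_card_connBetween_singleton hrest_conn hv_rest
  have hinsert_le := card_le_card_connBetween_singleton hinsert_conn (mem_insert_self v C)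
  have hmul := hC.card_connBetween_insert_mul_le hv (mem_singleton_self v)
  rw [hcount] at hmul
  have hrest : IsPathWithEnd G (W \ C) v := .of_card_connBetween_le hrest_conn hv_rest <|
    Nat.le_of_mul_le_mul_right ((Nat.mul_le_mul_left _ hinsert_le).trans hmul)
      (card_pos.2 ⟨v, mem_insert_self v C⟩)
  have hinsert : IsPathWithEnd G (insert v C) v :=
    .of_card_connBetween_le hinsert_conn (mem_insert_self v C) <|
      Nat.le_of_mul_le_mul_left ((Nat.mul_le_mul_right _ hrest_le).trans hmul)
        (card_pos.2 ⟨v, hv_rest⟩)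
  exact hC.exists_isPathWithEnd_of_sdiff_of_insert hv hrest hinsert

theorem IsConnSet.excess_eq_zero_iff (hW : IsConnSet G W) :
    excess G W = 0 ↔ ∃ e, IsPathWithEnd G W e := by
  refine ⟨fun h ↦ ?_, fun ⟨e, he⟩ ↦ he.excess_eq_zero⟩
  induction hn : #W using Nat.strong_induction_on generalizing W with
  | h n ih =>
  obtain ⟨v, hv, htight⟩ := hW.exists_tight_of_excess_eq_zero h
  obtain hempty | ⟨c, hc⟩ := (W.erase v).eq_empty_or_nonempty
  · exact ⟨v, by rw [← insert_erase hv, hempty, insert_empty_eq]; exact .singleton v⟩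
  obtain ⟨C, hC, -⟩ := exists_isComponent_of_mem G hc
  have hlt : #C < n := hn ▸ card_lt_card (hC.subset.trans_ssubset (erase_ssubset hv))
  obtain ⟨x, hx⟩ := ih _ hlt hC.isConnSet (htight C hC).1 rfl
  exact hC.exists_isPathWithEnd_of_tight hW hv hx (htight C hC).2

end Paths

section PathGraph

variable {V : Type*} {G : SimpleGraph V} {W : Finset V} {x : V}

theorem IsPathWithEnd.exists_enumeration (h : IsPathWithEnd G W x) :
    ∃ f : ℕ → V, f 0 = x ∧ (∀ i < #W, f i ∈ W) ∧ Set.InjOn f {i | i < #W} ∧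
      ∀ i < #W, ∀ j < #W, G.Adj (f i) (f j) ↔ i + 1 = j ∨ j + 1 = i := by
  induction h with
  | singleton x => exact ⟨fun _ ↦ x, rfl, by simp, by simp [Set.InjOn], by simp⟩
  | @insert W x y h hy hxy huniq ih =>
    obtain ⟨f, hf0, hmem, hinj, hadj⟩ := ih
    have hadj_y : ∀ j < #W, G.Adj y (f j) ↔ j = 0 := fun j hj ↦ by
      refine ⟨fun hyj ↦ hinj hj (card_pos.2 ⟨x, h.end_mem⟩) ?_, ?_⟩
      · rw [huniq _ (hmem j hj) hyj, hf0]
      · rintro rfl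
        exact hf0 ▸ hxy.symm
    rw [card_insert_of_notMem hy]
    refine ⟨fun i ↦ Nat.casesOn i y f, rfl, ?_, ?_, ?_⟩
    · rintro (_ | i) hi
      · exact mem_insert_self y W
      · exact mem_insert_of_mem (hmem i (Nat.lt_of_succ_lt_succ hi))
    · have hne : ∀ i < #W, y ≠ f i := fun i hi hyi ↦ hy (hyi ▸ hmem i hi)
      rintro (_ | i) hi (_ | j) hj hij
      · rfl
      · exact absurd hij (hne j (Nat.lt_of_succ_lt_succ hj))
      · exact absurd hij.symm (hne i (Nat.lt_of_succ_lt_succ hi))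
      · rw [hinj (Nat.lt_of_succ_lt_succ hi) (Nat.lt_of_succ_lt_succ hj) hij]
    · rintro (_ | i) hi (_ | j) hj
      · simp
      · simpa [eq_comm] using hadj_y j (Nat.lt_of_succ_lt_succ hj)
      · simpa [eq_comm, G.adj_comm] using hadj_y i (Nat.lt_of_succ_lt_succ hi)
      · simpa using hadj i (Nat.lt_of_succ_lt_succ hi) j (Nat.lt_of_succ_lt_succ hj)

variable [Fintype V]

theorem IsPathWithEnd.nonempty_iso_pathGraph (h : IsPathWithEnd G univ x) :
    Nonempty (G ≃g SimpleGraph.pathGraph (Fintype.card V)) := by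
  obtain ⟨f, -, -, hinj, hadj⟩ := h.exists_enumeration
  rw [card_univ] at hinj hadj
  have hbij : Function.Bijective fun i : Fin (Fintype.card V) ↦ f i :=
    (Fintype.bijective_iff_injective_and_card _).2
      ⟨fun i j hij ↦ Fin.ext (hinj i.2 j.2 hij), Fintype.card_fin _⟩
  refine ⟨SimpleGraph.Iso.symm ⟨Equiv.ofBijective _ hbij, fun {i j} ↦ ?_⟩⟩
  rw [Equiv.ofBijective_apply, Equiv.ofBijective_apply, hadj i i.2 j j.2, SimpleGraph.pathGraph_adj]

theorem isPathWithEnd_filter_le {n : ℕ} (e : G ≃g SimpleGraph.pathGraph n) {k : ℕ} (hk : k < n) :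
    IsPathWithEnd G {y | (e y : ℕ) ≤ k} (e.symm ⟨k, hk⟩) := by
  have eq_symm_apply_iff {k : ℕ} (hk : k < n) (y : V) : y = e.symm ⟨k, hk⟩ ↔ (e y : ℕ) = k := by
    rw [← e.injective.eq_iff, e.apply_symm_apply, Fin.ext_iff]
  induction k with
  | zero =>
    have hzero : ({y | (e y : ℕ) ≤ 0} : Finset V) = {e.symm ⟨0, hk⟩} := by
      ext y
      simp [eq_symm_apply_iff]
    exact hzero ▸ .singleton _
  | succ k ih =>
    have hsucc : ({y | (e y : ℕ) ≤ k + 1} : Finset V) =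
        insert (e.symm ⟨k + 1, hk⟩) ({y | (e y : ℕ) ≤ k} : Finset V) := by
      ext y
      simp only [mem_filter_univ, mem_insert, eq_symm_apply_iff]
      lia
    rw [hsucc]
    refine (ih (Nat.lt_of_succ_lt hk)).insert (by simp) ?_ fun z hz hadj ↦ ?_
    · rw [← e.map_adj_iff, SimpleGraph.pathGraph_adj]
      simp
    · rw [← e.map_adj_iff, e.apply_symm_apply, SimpleGraph.pathGraph_adj] at hadj
      rw [mem_filter_univ] at hz
      rw [eq_symm_apply_iff]
      dsimp only at hadj
      lia

theorem exists_isPathWithEnd_univ_iff [Nonempty V] :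
    (∃ x, IsPathWithEnd G univ x) ↔
      Nonempty (G ≃g SimpleGraph.pathGraph (Fintype.card V)) := by
  refine ⟨fun ⟨x, h⟩ ↦ h.nonempty_iso_pathGraph, fun ⟨e⟩ ↦ ?_⟩
  have h := isPathWithEnd_filter_le e (Nat.sub_one_lt Fintype.card_ne_zero)
  rw [filter_true_of_mem fun y _ ↦ Nat.le_sub_one_of_lt (e y).2] at h
  exact ⟨_, h⟩

theorem connSets_eq_connBetween (G : SimpleGraph V) : connSets G = connBetween G ∅ univ := by
  ext U
  simp only [connSets, mem_filter_univ, mem_connBetween, empty_subset, subset_univ, true_and]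
  exact ⟨And.right, fun hU ↦ ⟨IsConnSet.nonempty hU, hU⟩⟩

theorem isConnSet_univ (hG : G.Connected) : IsConnSet G univ := by
  rw [IsConnSet, coe_univ]
  exact SimpleGraph.induceUnivIso G |>.connected_iff.2 hG

end PathGraph

theorem stmt_6 {V : Type*} [Fintype V] (G : SimpleGraph V) (hG : G.Connected) :
    ((∑ U ∈ connSets G, (U.card : ℝ)) / (connSets G).card ≥ (Fintype.card V + 2) / 3) ∧
    ((∑ U ∈ connSets G, (U.card : ℝ)) / (connSets G).card = (Fintype.card V + 2) / 3 ↔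
      Nonempty (G ≃g SimpleGraph.pathGraph (Fintype.card V))) := by
  have := hG.nonempty
  have hconn := isConnSet_univ hG
  have hpos : (0 : ℝ) < #(connSets G) := by
    rw [connSets_eq_connBetween]
    exact_mod_cast card_pos.2 ⟨univ, mem_connBetween.2 ⟨empty_subset _, Subset.rfl, hconn⟩⟩
  have hexcess : (excess G univ : ℝ) =
      3 * ∑ U ∈ connSets G, (#U : ℝ) - (Fintype.card V + 2) * #(connSets G) := by
    rw [excess, connSets_eq_connBetween, card_univ]
    push_cast
    rfl
  constructor
  · have hnonneg : (0 : ℝ) ≤ excess G univ := by exact_mod_cast hconn.excess_nonneg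
    rw [ge_iff_le, div_le_div_iff₀ three_pos hpos]
    linarith
  · rw [← exists_isPathWithEnd_univ_iff, ← hconn.excess_eq_zero_iff, ← Int.cast_eq_zero (α := ℝ),
      hexcess, div_eq_div_iff hpos.ne' three_ne_zero]
    constructor <;> intro h <;> linarith
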